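/- Let (R,B) be an EIC problem with problem graph G=(V,E) in which every node requests at least one block, and suppose χ(G) ≥ 2. Then for every neighborhood partition {Ñ_1,…,Ñ_n}, Σ_{i=1}^n ω(Ḡ|_{Ñ_i}) ≥ |V|/(χ(G)−1), where ω(Ḡ|_{Ñ_i}) is the maximum size of an independent set of the induced subgraph G|_{Ñ_i}. -/

import Mathlib

open Matrix BigOperators

namespace EIC

variable {n m : ℕ}

/-- The vertex set of the problem graph of the EIC problem `(R, B)`:
one vertex for each requirement pair `(u, a)` with `R u a = 1`. -/
abbrev Vtx (R : Matrix (Fin n) (Fin m) (ZMod 2)) : Type :=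
  {p : Fin n × Fin m // R p.1 p.2 = 1}

/-- `(R, B)` have disjoint supports: no position has both `B = 1` and `R = 1`. -/
def DisjointSupports (R B : Matrix (Fin n) (Fin m) (ZMod 2)) : Prop :=
  ∀ u a, ¬(B u a = 1 ∧ R u a = 1)

/-- The standard basis vector `e_a ∈ F_2^m`. -/
def e (m : ℕ) (a : Fin m) : Fin m → ZMod 2 := Pi.single a 1

/-- `β` (with rows indexed by `ι`) is a centralized linear broadcast solution to `(R, B)`:
for every requirement pair `(u, a)` there is `α` with `e_a = α · [β ; diag(B_u)]`. -/
def IsCentralizedSolution (R B : Matrix (Fin n) (Fin m) (ZMod 2))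
    {ι : Type} [Fintype ι] (β : Matrix ι (Fin m) (ZMod 2)) : Prop :=
  ∀ u a, R u a = 1 →
    ∃ α : ι ⊕ Fin m → ZMod 2,
      e m a = α ᵥ* Matrix.fromRows β (Matrix.diagonal (B u))

/-- `(C)_{(R,B)}`: the minimum length of a centralized linear broadcast solution. -/
noncomputable def Copt (R B : Matrix (Fin n) (Fin m) (ZMod 2)) : ℕ :=
  sInf {h | ∃ β : Matrix (Fin h) (Fin m) (ZMod 2), IsCentralizedSolution R B β}

/-- The vertical concatenation of the matrices `β u`, `u ∈ [n]`. -/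
def vconcat {h : Fin n → ℕ} (β : ∀ u : Fin n, Matrix (Fin (h u)) (Fin m) (ZMod 2)) :
    Matrix ((ℓ : Fin n) × Fin (h ℓ)) (Fin m) (ZMod 2) :=
  Matrix.of fun p => β p.1 p.2

/-- `β⁽¹⁾, …, β⁽ⁿ⁾` is a (decentralized) linear broadcast solution to `(R, B)`. -/
def IsBroadcastSolution (R B : Matrix (Fin n) (Fin m) (ZMod 2))
    {h : Fin n → ℕ} (β : ∀ u : Fin n, Matrix (Fin (h u)) (Fin m) (ZMod 2)) : Prop :=
  (∀ u a, B u a = 0 → ∀ i, β u i a = 0) ∧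
  ∀ u a, R u a = 1 →
    ∃ α : ((ℓ : Fin n) × Fin (h ℓ)) ⊕ Fin m → ZMod 2,
      e m a = α ᵥ* Matrix.fromRows (vconcat β) (Matrix.diagonal (B u))

/-- `(D)_{(R,B)}`: the minimum length of a decentralized linear broadcast solution. -/
noncomputable def Dopt (R B : Matrix (Fin n) (Fin m) (ZMod 2)) : ℕ :=
  sInf {s | ∃ (h : Fin n → ℕ) (β : ∀ u : Fin n, Matrix (Fin (h u)) (Fin m) (ZMod 2)),
    IsBroadcastSolution R B β ∧ ∑ u, h u = s}

/-- A task-based solution: a linear broadcast solution where every requirement pair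
`(u, a)` can be decoded from the broadcast of a single responsible sender `ℓ`. -/
def IsTaskBased (R B : Matrix (Fin n) (Fin m) (ZMod 2))
    {h : Fin n → ℕ} (β : ∀ u : Fin n, Matrix (Fin (h u)) (Fin m) (ZMod 2)) : Prop :=
  IsBroadcastSolution R B β ∧
  ∀ u a, R u a = 1 → ∃ ℓ : Fin n, ∃ α : Fin (h ℓ) ⊕ Fin m → ZMod 2,
    e m a = α ᵥ* Matrix.fromRows (β ℓ) (Matrix.diagonal (B u))

/-- `(T)_{(R,B)}`: the minimum length of a task-based solution. -/
noncomputable def Topt (R B : Matrix (Fin n) (Fin m) (ZMod 2)) : ℕ :=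
  sInf {s | ∃ (h : Fin n → ℕ) (β : ∀ u : Fin n, Matrix (Fin (h u)) (Fin m) (ZMod 2)),
    IsTaskBased R B β ∧ ∑ u, h u = s}

/-- The edge relation of the problem graph: for distinct requirement pairs `(u,a)`, `(w,b)`,
there is an edge from `v_{(u,a)}` to `v_{(w,b)}` iff `B u b = 1` or `a = b`. -/
def probEdge (R B : Matrix (Fin n) (Fin m) (ZMod 2)) (v w : Vtx R) : Prop :=
  v ≠ w ∧ (B v.1.1 w.1.2 = 1 ∨ v.1.2 = w.1.2)

/-- A matrix `A` fits a directed graph with edge relation `E`. -/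
def Fits {V : Type} (E : V → V → Prop) (A : Matrix V V (ZMod 2)) : Prop :=
  (∀ k, A k k = 1) ∧ ∀ k l, k ≠ l → ¬ E k l → A k l = 0

/-- `minrk₂`: the minimum `F₂`-rank of a matrix fitting the graph. -/
noncomputable def minrk {V : Type} [Fintype V] (E : V → V → Prop) : ℕ :=
  sInf {r | ∃ A : Matrix V V (ZMod 2), Fits E A ∧ A.rank = r}

/-- `rminrk₂`: the minimum `F₂`-rank of a matrix in `𝒜` fitting the graph. -/
noncomputable def rminrk {V : Type} [Fintype V] (E : V → V → Prop)
    (𝒜 : Set (Matrix V V (ZMod 2))) : ℕ :=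
  sInf {r | ∃ A ∈ 𝒜, Fits E A ∧ A.rank = r}

/-- The column repetition function `φ_{(R,B)}`: the column of `φ(A)` indexed by
`v_{(u,a)}` is the `a`-th column of `A`. -/
def phi (R : Matrix (Fin n) (Fin m) (ZMod 2))
    (A : Matrix (Vtx R) (Fin m) (ZMod 2)) : Matrix (Vtx R) (Vtx R) (ZMod 2) :=
  Matrix.of fun k v => A k v.1.2

/-- The sender neighborhood `N_u = {v_{(w,b)} ∈ V : B u b = 1}`. -/
def senderNbhd (R B : Matrix (Fin n) (Fin m) (ZMod 2)) (u : Fin n) : Set (Vtx R) :=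
  {v | B u v.1.2 = 1}

/-- A neighborhood partition `{Ñ_1, …, Ñ_n}`. -/
def IsNbhdPartition (R B : Matrix (Fin n) (Fin m) (ZMod 2))
    (N : Fin n → Set (Vtx R)) : Prop :=
  (∀ i, N i ⊆ senderNbhd R B i) ∧
  (∀ i j, i ≠ j → Disjoint (N i) (N j)) ∧
  (⋃ i, N i) = Set.univ

open Classical in
/-- `R^(i)`: the request matrix of the EIC subproblem induced by `Ñ_i`; it has ones
exactly at the requirement pairs whose vertex lies in `Ñ_i`. -/
noncomputable def Rsub (R : Matrix (Fin n) (Fin m) (ZMod 2))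
    (N : Fin n → Set (Vtx R)) (i : Fin n) : Matrix (Fin n) (Fin m) (ZMod 2) :=
  Matrix.of fun u a =>
    if hr : R u a = 1 then (if (⟨(u, a), hr⟩ : Vtx R) ∈ N i then 1 else 0) else 0

open Classical in
/-- `B^(i)`: the has-matrix of the EIC subproblem induced by `Ñ_i`; it agrees with `B`
on the columns of blocks requested in `Ñ_i` and is zero elsewhere. -/
noncomputable def Bsub (R B : Matrix (Fin n) (Fin m) (ZMod 2))
    (N : Fin n → Set (Vtx R)) (i : Fin n) : Matrix (Fin n) (Fin m) (ZMod 2) :=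
  Matrix.of fun u a => if ∃ v ∈ N i, v.1.2 = a then B u a else 0

/-- `Cl` is a clique for the edge relation `E`. -/
def IsClique {V : Type} (E : V → V → Prop) (Cl : Set V) : Prop :=
  ∀ k ∈ Cl, ∀ l ∈ Cl, k ≠ l → E k l

/-- `I` is an independent set for the edge relation `E` (no edge in either direction). -/
def IsIndep {V : Type} (E : V → V → Prop) (I : Set V) : Prop :=
  ∀ k ∈ I, ∀ l ∈ I, k ≠ l → ¬ E k l ∧ ¬ E l k

/-- `χ(Ḡ|_S)`: the minimum number of cliques of the induced subgraph `G|_S`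
needed to partition `S`. -/
noncomputable def cliqueCoverNum {V : Type} (E : V → V → Prop) (S : Set V) : ℕ :=
  sInf {t | ∃ Cl : Fin t → Set V, (∀ i, Cl i ⊆ S) ∧ (∀ i, IsClique E (Cl i)) ∧
    (∀ i j, i ≠ j → Disjoint (Cl i) (Cl j)) ∧ (⋃ i, Cl i) = S}

/-- `χ(G)`: the minimum number of independent sets of `G` needed to partition
its vertex set. -/
noncomputable def chromNum {V : Type} [Fintype V] (E : V → V → Prop) : ℕ :=
  sInf {t | ∃ I : Fin t → Set V, (∀ i, IsIndep E (I i)) ∧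
    (∀ i j, i ≠ j → Disjoint (I i) (I j)) ∧ (⋃ i, I i) = Set.univ}

/-- `ω(Ḡ|_S)`: the maximum size of an independent set of the induced subgraph `G|_S`. -/
noncomputable def indepNum {V : Type} (E : V → V → Prop) (S : Set V) : ℕ :=
  sSup {t | ∃ I ⊆ S, IsIndep E I ∧ I.ncard = t}

/-- The set of neighborhood-cliques: vertex sets of maximal cliques of the induced
subgraphs `G|_{N_i}`, over all senders `i`. -/
def nbhdCliques (R B : Matrix (Fin n) (Fin m) (ZMod 2)) : Set (Set (Vtx R)) :=
  {Cl | ∃ i : Fin n, Cl ⊆ senderNbhd R B i ∧ IsClique (probEdge R B) Cl ∧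
    ∀ Cl', Cl ⊆ Cl' → Cl' ⊆ senderNbhd R B i → IsClique (probEdge R B) Cl' → Cl' = Cl}

/-!
Let `v` be a requirement pair of node `i`. Since `i` has every block requested in `Ñ_i` but not the
block it requests in `v`, the vertex `v` has an edge to every vertex of `Ñ_i`. In an optimal
colouring of `G` the colour of `v` is therefore absent from `Ñ_i`, so `Ñ_i` is covered by `χ(G) - 1`
independent sets and has at most `(χ(G) - 1) ω(Ḡ|_{Ñ_i})` elements. Summing over `i` gives the
bound.
-/

/-- The out-neighbourhood of `v` for the edge relation `E`, which never contains `v` itself,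
even when `E v v` holds: loops play no role in `IsIndep`. -/
def outNbhd {V : Type} (E : V → V → Prop) (v : V) : Set V :=
  {w | v ≠ w ∧ E v w}

section Digraph

variable {V : Type} {E : V → V → Prop}

theorem IsIndep.mono {I J : Set V} (hI : IsIndep E I) (hJI : J ⊆ I) : IsIndep E J :=
  fun k hk l hl => hI k (hJI hk) l (hJI hl)

theorem IsIndep.disjoint_outNbhd {I : Set V} {v : V} (hI : IsIndep E I) (hv : v ∈ I) :
    Disjoint I (outNbhd E v) :=
  Set.disjoint_left.2 fun w hw hvw => (hI v hv w hw hvw.1).1 hvw.2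

theorem IsIndep.ncard_le_indepNum [Finite V] {I S : Set V} (hI : IsIndep E I) (hIS : I ⊆ S) :
    I.ncard ≤ indepNum E S := by
  refine le_csSup ⟨Nat.card V, ?_⟩ ⟨I, hIS, hI, rfl⟩
  rintro _ ⟨J, -, -, rfl⟩
  exact Set.ncard_le_card J

theorem ncard_le_card_mul_indepNum [Finite V] {κ : Type*} {I : κ → Set V} {S : Set V}
    (J : Finset κ) (hI : ∀ j ∈ J, IsIndep E (I j)) (hS : S ⊆ ⋃ j ∈ J, I j) :
    S.ncard ≤ J.card * indepNum E S :=
  calc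
    S.ncard = (⋃ j ∈ J, S ∩ I j).ncard := by
      rw [← Set.inter_iUnion₂, Set.inter_eq_left.2 hS]
    _ ≤ ∑ j ∈ J, (S ∩ I j).ncard := J.set_ncard_biUnion_le _
    _ ≤ J.card * indepNum E S := Finset.sum_le_card_nsmul J _ _ fun j hj =>
      ((hI j hj).mono Set.inter_subset_right).ncard_le_indepNum Set.inter_subset_left

variable (E) in
theorem exists_isIndep_partition_chromNum [Fintype V] :
    ∃ I : Fin (chromNum E) → Set V, (∀ i, IsIndep E (I i)) ∧
      (∀ i j, i ≠ j → Disjoint (I i) (I j)) ∧ (⋃ i, I i) = Set.univ := by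
  let color := Fintype.equivFin V
  refine (Nat.sInf_mem ⟨Fintype.card V, fun i => {color.symm i}, ?_, ?_, ?_⟩ : chromNum E ∈ _)
  · rintro i _ rfl _ rfl hne
    exact absurd rfl hne
  · exact fun i j hij => Set.disjoint_singleton.2 (color.symm.injective.ne hij)
  · rw [Set.iUnion_singleton_eq_range, color.symm.range_eq_univ]

theorem ncard_le_chromNum_sub_one_mul_indepNum [Fintype V] {S : Set V} {v : V}
    (hS : S ⊆ outNbhd E v) : S.ncard ≤ (chromNum E - 1) * indepNum E S := by
  obtain ⟨I, hI, -, hcover⟩ := exists_isIndep_partition_chromNum E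
  obtain ⟨c, hvc⟩ := Set.iUnion_eq_univ_iff.1 hcover v
  have hS' : S ⊆ ⋃ j ∈ Finset.univ.erase c, I j := by
    intro w hw
    obtain ⟨j, hwj⟩ := Set.iUnion_eq_univ_iff.1 hcover w
    have hjc : j ≠ c := by
      rintro rfl
      exact Set.disjoint_left.1 ((hI j).disjoint_outNbhd hvc) hwj (hS hw)
    exact Set.mem_iUnion₂.2 ⟨j, by simpa using hjc, hwj⟩
  simpa using ncard_le_card_mul_indepNum _ (fun j _ => hI j) hS'

theorem card_le_chromNum_sub_one_mul_sum_indepNum [Fintype V] {ι : Type*} [Fintype ι]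
    {N : ι → Set V} (hN : ∀ i, ∃ v, N i ⊆ outNbhd E v) (hcover : ⋃ i, N i = Set.univ) :
    Fintype.card V ≤ (chromNum E - 1) * ∑ i, indepNum E (N i) :=
  calc
    Fintype.card V = (⋃ i, N i).ncard := by
      rw [hcover, Set.ncard_univ, Nat.card_eq_fintype_card]
    _ ≤ ∑ i, (N i).ncard := Set.ncard_iUnion_le_of_fintype N
    _ ≤ ∑ i, (chromNum E - 1) * indepNum E (N i) := Finset.sum_le_sum fun i _ =>
      (hN i).elim fun _ => ncard_le_chromNum_sub_one_mul_indepNum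
    _ = (chromNum E - 1) * ∑ i, indepNum E (N i) := (Finset.mul_sum _ _ _).symm

theorem partition_indep_lower_bound_general [Fintype V] {ι : Type*} [Fintype ι]
    {N : ι → Set V} (hN : ∀ i, ∃ v, N i ⊆ outNbhd E v) (hcover : ⋃ i, N i = Set.univ) :
    (Fintype.card V : ℝ) / ((chromNum E : ℝ) - 1) ≤ ∑ i, (indepNum E (N i) : ℝ) := by
  have hcard := card_le_chromNum_sub_one_mul_sum_indepNum hN hcover
  obtain hχ | hχ := (chromNum E).eq_zero_or_pos
  · have hV : Fintype.card V = 0 := by simpa [hχ] using hcard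
    rw [hV, Nat.cast_zero, zero_div]
    positivity
  · rw [← Nat.cast_pred hχ]
    refine div_le_of_le_mul₀ (Nat.cast_nonneg _) (by positivity) ?_
    rw [mul_comm]
    exact_mod_cast hcard

end Digraph

theorem senderNbhd_subset_outNbhd {R B : Matrix (Fin n) (Fin m) (ZMod 2)}
    (hdisj : DisjointSupports R B) (v : Vtx R) :
    senderNbhd R B v.1.1 ⊆ outNbhd (probEdge R B) v := by
  intro w hw
  have hvw : v ≠ w := by
    rintro rfl
    exact hdisj _ _ ⟨hw, v.2⟩
  exact ⟨hvw, hvw, Or.inl hw⟩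

theorem partition_indep_lower_bound {n m : ℕ}
    (R B : Matrix (Fin n) (Fin m) (ZMod 2)) (hdisj : DisjointSupports R B)
    (hreq : ∀ u, ∃ a, R u a = 1)
    (hchrom : 2 ≤ chromNum (probEdge R B))
    (N : Fin n → Set (Vtx R)) (hpart : IsNbhdPartition R B N) :
    (Fintype.card (Vtx R) : ℝ) / ((chromNum (probEdge R B) : ℝ) - 1) ≤
      ∑ i, (indepNum (probEdge R B) (N i) : ℝ) := by
  refine partition_indep_lower_bound_general (fun i => ?_) hpart.2.2
  obtain ⟨a, ha⟩ := hreq i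
  exact ⟨⟨(i, a), ha⟩, (hpart.1 i).trans (senderNbhd_subset_outNbhd hdisj ⟨(i, a), ha⟩)⟩

end EIC
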